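/- Let SO(3) be the group of 3×3 real special orthogonal matrices, let d(g,h) = arccos((tr(g h⁻¹) − 1)/2) be the bi-invariant distance, let e be the identity matrix, and define the Brownian kernel K(g,h) = (1/2)(d(g,e) + d(h,e) − d(g,h)). Then K is NOT a positive definite kernel on SO(3): there exist n, elements g₁,…,gₙ ∈ SO(3) and ξ₁,…,ξₙ ∈ ℂ such that the real part of ∑_{i,j} K(gᵢ,gⱼ) ξᵢ conj(ξⱼ) is strictly negative. In particular there exists no centered Gaussian process (Lévy Brownian motion) X indexed by SO(3) with X_e = 0 and E|X_g − X_h|² = d(g,h). -/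

import Mathlib

/-- `SO(n)` as found in Mathlib is only a submonoid of the matrices; we endow it with its
natural group structure (the inverse being the transpose). -/
noncomputable instance instGroupSO (n : ℕ) : Group (Matrix.specialOrthogonalGroup (Fin n) ℝ) :=
  { (inferInstance : Monoid (Matrix.specialOrthogonalGroup (Fin n) ℝ)) with
    inv := fun g => ⟨star g.1, by
      rw [Matrix.mem_specialUnitaryGroup_iff]
      refine ⟨Unitary.star_mem g.2.1, ?_⟩
      have hdet : (g.1).det = 1 := g.2.2
      simp [Matrix.star_eq_conjTranspose, Matrix.det_conjTranspose, hdet]⟩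
    inv_mul_cancel := fun g => by
      apply Subtype.ext
      exact (Unitary.mem_iff.mp g.2.1).1 }

/-- `SO(n)` is a topological group. -/
instance instTopGroupSO (n : ℕ) : IsTopologicalGroup (Matrix.specialOrthogonalGroup (Fin n) ℝ) where
  continuous_mul := by
    apply Continuous.subtype_mk
    exact (continuous_mul.comp ((continuous_subtype_val.comp continuous_fst).prodMk
      (continuous_subtype_val.comp continuous_snd)))
  continuous_inv := by
    apply Continuous.subtype_mk
    exact continuous_star.comp continuous_subtype_val

/-- The bi-invariant Riemannian distance on `SO(3)`: the rotation angle of `g h⁻¹`. -/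
noncomputable def dSO3 (g h : Matrix.specialOrthogonalGroup (Fin 3) ℝ) : ℝ :=
  Real.arccos ((Matrix.trace ((g * h⁻¹ : Matrix.specialOrthogonalGroup (Fin 3) ℝ) :
    Matrix (Fin 3) (Fin 3) ℝ) - 1) / 2)

/-- Integer matrices of the eight rotations: a Klein four-group and one of its cosets in the
tetrahedral rotation group. -/
def tetM : Fin 8 → Matrix (Fin 3) (Fin 3) ℤ :=
  ![!![1, 0, 0; 0, 1, 0; 0, 0, 1], !![1, 0, 0; 0, -1, 0; 0, 0, -1],
    !![-1, 0, 0; 0, 1, 0; 0, 0, -1], !![-1, 0, 0; 0, -1, 0; 0, 0, 1],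
    !![0, 1, 0; 0, 0, 1; 1, 0, 0], !![0, 1, 0; 0, 0, -1; -1, 0, 0],
    !![0, -1, 0; 0, 0, 1; -1, 0, 0], !![0, -1, 0; 0, 0, -1; 1, 0, 0]]

/-- The weights. -/
def tetC : Fin 8 → ℤ := ![1, 1, 1, 1, -1, -1, -1, -1]

/-- The distances, in units of `π / 3`. -/
def tetN (i j : Fin 8) : ℤ := if i = j then 0 else if tetC i = tetC j then 3 else 2

lemma tetM_mul : ∀ i, tetM i * (tetM i).transpose = 1 := by decide

lemma tetM_det : ∀ i, (tetM i).det = 1 := by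
  intro i
  rw [Matrix.det_fin_three]
  revert i
  decide

lemma tetM_trace : ∀ i j, (tetM i * (tetM j).transpose).trace =
    if i = j then 3 else if tetC i = tetC j then -1 else 0 := by
  intro i j
  rw [Matrix.trace_fin_three]
  revert i j
  decide

/-- The eight rotations. -/
noncomputable def tetG (i : Fin 8) : Matrix.specialOrthogonalGroup (Fin 3) ℝ :=
  ⟨(tetM i).map (Int.castRingHom ℝ), by
    rw [Matrix.mem_specialOrthogonalGroup_iff, Matrix.mem_orthogonalGroup_iff]
    refine ⟨?_, ?_⟩
    · have h : ((tetM i).map (Int.castRingHom ℝ)).transpose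
          = (tetM i).transpose.map (Int.castRingHom ℝ) := by
        ext a b; simp
      rw [h, ← Matrix.map_mul, tetM_mul]
      simp
    · have h := (Int.castRingHom ℝ).map_det (tetM i)
      rw [tetM_det] at h
      simpa using h.symm⟩

lemma tetG_zero : tetG 0 = 1 := by
  apply Subtype.ext
  have h : tetM 0 = 1 := by decide
  simp [tetG, h]

lemma tetG_dist (i j : Fin 8) : dSO3 (tetG i) (tetG j) = Real.pi / 3 * (tetN i j : ℝ) := by
  have h : (((tetG i) * (tetG j)⁻¹ : Matrix.specialOrthogonalGroup (Fin 3) ℝ) :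
      Matrix (Fin 3) (Fin 3) ℝ) = (tetM i * (tetM j).transpose).map (Int.castRingHom ℝ) := by
    rw [Matrix.map_mul]
    change (tetM i).map (Int.castRingHom ℝ) * star ((tetM j).map (Int.castRingHom ℝ)) = _
    congr 1
  have ht : ((tetM i * (tetM j).transpose).map (Int.castRingHom ℝ)).trace
      = (((tetM i * (tetM j).transpose).trace : ℤ) : ℝ) := by
    simp [Matrix.trace]
  unfold dSO3
  rw [h, ht, tetM_trace]
  unfold tetN
  split_ifs
  · norm_num
  · norm_num
  · have h2 : Real.arccos (-(1 / 2)) = Real.pi - Real.pi / 3 := by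
      rw [Real.arccos_neg, ← Real.cos_pi_div_three, Real.arccos_cos] <;> linarith [Real.pi_pos]
    have h3 : (((0 : ℤ) : ℝ) - 1) / 2 = -(1 / 2) := by norm_num
    rw [h3, h2]
    push_cast
    ring

lemma tet_sum : ∑ i, ∑ j, (tetN i 0 + tetN j 0 - tetN i j) * tetC i * tetC j = -8 := by decide

lemma tet_sum' : ∑ i, ∑ j, tetC i * tetC j * tetN i j = 8 := by decide

open MeasureTheory Finset in
/-- The Brownian kernel `K(g,h) = (d(g,e) + d(h,e) - d(g,h))/2` on `SO(3)` is NOT positive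
definite; in particular there exists no centered Gaussian process (Lévy's Brownian motion)
`X` indexed by `SO(3)` with `X_e = 0` and `E|X_g - X_h|² = d(g,h)`. -/
theorem SO3_brownian_kernel_not_posdef :
    (∃ (n : ℕ) (g : Fin n → Matrix.specialOrthogonalGroup (Fin 3) ℝ) (ξ : Fin n → ℂ),
      (∑ i, ∑ j,
        (((dSO3 (g i) 1 + dSO3 (g j) 1 - dSO3 (g i) (g j)) / 2 : ℝ) : ℂ)
          * ξ i * (starRingEnd ℂ) (ξ j)).re < 0) ∧
    ¬ ∃ (Ω : Type) (_ : MeasurableSpace Ω) (P : Measure Ω)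
        (_ : IsProbabilityMeasure P)
        (X : Matrix.specialOrthogonalGroup (Fin 3) ℝ → Ω → ℝ),
      (∀ g, AEMeasurable (X g) P) ∧
      -- `X` is a Gaussian process: every finite linear combination is Gaussian
      (∀ (n : ℕ) (g : Fin n → Matrix.specialOrthogonalGroup (Fin 3) ℝ) (c : Fin n → ℝ),
        ∃ (m : ℝ) (v : NNReal),
          Measure.map (fun ω => ∑ i, c i * X (g i) ω) P = ProbabilityTheory.gaussianReal m v) ∧
      -- centered
      (∀ g, ∫ ω, X g ω ∂P = 0) ∧
      -- vanishing at the identity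
      (∀ ω, X 1 ω = 0) ∧
      -- Lévy's Brownian motion property
      (∀ g h, ∫ ω, (X g ω - X h ω) ^ 2 ∂P = dSO3 g h) := by
  constructor
  · refine ⟨8, tetG, fun i => ((tetC i : ℝ) : ℂ), ?_⟩
    have key : (∑ i, ∑ j, (((dSO3 (tetG i) 1 + dSO3 (tetG j) 1 - dSO3 (tetG i) (tetG j)) / 2 : ℝ)
        : ℂ) * ((tetC i : ℝ) : ℂ) * (starRingEnd ℂ) ((tetC j : ℝ) : ℂ))
        = ((Real.pi / 6 * ((∑ i, ∑ j, (tetN i 0 + tetN j 0 - tetN i j) * tetC i * tetC j : ℤ) : ℝ)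
          : ℝ) : ℂ) := by
      rw [← tetG_zero]
      simp only [tetG_dist, Complex.conj_ofReal]
      push_cast
      simp only [Finset.mul_sum]
      refine Finset.sum_congr rfl fun i _ => Finset.sum_congr rfl fun j _ => ?_
      ring
    rw [key, tet_sum, Complex.ofReal_re]
    push_cast
    linarith [Real.pi_pos]
  · rintro ⟨Ω, _, P, _, X, -, -, -, -, hX⟩
    have hint : ∀ i j, Integrable (fun ω => (X (tetG i) ω - X (tetG j) ω) ^ 2) P := by
      intro i j
      by_cases hij : i = j
      · subst hij
        simp
      · by_contra hn
        have h := hX (tetG i) (tetG j)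
        rw [integral_undef hn, tetG_dist] at h
        have hp := Real.pi_pos
        have hN : (tetN i j : ℝ) ≠ 0 := by
          unfold tetN
          rw [if_neg hij]
          split_ifs <;> norm_num
        have : Real.pi / 3 * (tetN i j : ℝ) ≠ 0 := mul_ne_zero (by positivity) hN
        exact this h.symm
    have h1 : ∫ ω, ∑ i, ∑ j, ((tetC i : ℝ) * (tetC j : ℝ)) *
        (X (tetG i) ω - X (tetG j) ω) ^ 2 ∂P = Real.pi / 3 * 8 := by
      rw [integral_finsetSum _ fun i _ => integrable_finsetSum _ fun j _ =>
        (hint i j).const_mul _]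
      have h2 : ∀ i, ∫ ω, ∑ j, ((tetC i : ℝ) * (tetC j : ℝ)) *
          (X (tetG i) ω - X (tetG j) ω) ^ 2 ∂P
          = ∑ j, ((tetC i : ℝ) * (tetC j : ℝ)) * (Real.pi / 3 * (tetN i j : ℝ)) := by
        intro i
        rw [integral_finsetSum _ fun j _ => (hint i j).const_mul _]
        refine Finset.sum_congr rfl fun j _ => ?_
        rw [integral_const_mul, hX, tetG_dist]
      simp only [h2]
      have h3 : ((∑ i, ∑ j, tetC i * tetC j * tetN i j : ℤ) : ℝ) = 8 := by
        rw [tet_sum']; norm_num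
      rw [← h3]
      push_cast
      simp only [Finset.mul_sum]
      refine Finset.sum_congr rfl fun i _ => Finset.sum_congr rfl fun j _ => ?_
      ring
    have h4 : ∫ ω, ∑ i, ∑ j, ((tetC i : ℝ) * (tetC j : ℝ)) *
        (X (tetG i) ω - X (tetG j) ω) ^ 2 ∂P ≤ 0 := by
      refine integral_nonpos fun ω => ?_
      have hs : ∑ i, (tetC i : ℝ) = 0 := by
        have : ∑ i, tetC i = 0 := by decide
        exact_mod_cast this
      have h5 : ∑ i, ∑ j, ((tetC i : ℝ) * (tetC j : ℝ)) * (X (tetG i) ω - X (tetG j) ω) ^ 2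
          = 2 * ((∑ i, (tetC i : ℝ) * X (tetG i) ω ^ 2) * ∑ j, (tetC j : ℝ))
            - 2 * (∑ i, (tetC i : ℝ) * X (tetG i) ω) ^ 2 := by
        have h6 : ∑ i, ∑ j, ((tetC i : ℝ) * (tetC j : ℝ)) * (X (tetG i) ω - X (tetG j) ω) ^ 2
          = (∑ i, (tetC i : ℝ) * X (tetG i) ω ^ 2) * (∑ j, (tetC j : ℝ))
            + (∑ i, (tetC i : ℝ)) * (∑ j, (tetC j : ℝ) * X (tetG j) ω ^ 2)
            - 2 * ((∑ i, (tetC i : ℝ) * X (tetG i) ω) * (∑ j, (tetC j : ℝ) * X (tetG j) ω)) := by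
          rw [Finset.sum_mul_sum, Finset.sum_mul_sum, Finset.sum_mul_sum]
          simp only [Finset.mul_sum, ← Finset.sum_add_distrib,
            ← Finset.sum_sub_distrib]
          refine Finset.sum_congr rfl fun i _ => Finset.sum_congr rfl fun j _ => ?_
          ring
        rw [h6]
        ring
      change ∑ i, ∑ j, ((tetC i : ℝ) * (tetC j : ℝ)) * (X (tetG i) ω - X (tetG j) ω) ^ 2 ≤ 0
      rw [h5, hs]
      nlinarith [sq_nonneg (∑ i, (tetC i : ℝ) * X (tetG i) ω)]
    rw [h1] at h4
    linarith [Real.pi_pos]
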